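/- For m ≥ 1 define G_m := 4k⁴(α+β+m+1/2)(α+β+m−3/2)·β_m·β_{m−1} + 4k⁴(α+β+m+3/2)(α+β+m−1/2)·β_{m+1}·β_m + 8k⁴(α+β+m+1/2)(α+β+m−1/2)·β_m² − 4k²(k²+1)(α+β+m+1/2)(α+β+m−1/2)·β_m + (α·k²+β)² + k²·m·(m+2α+2β). Then for every integer n ≥ 1 the recurrence coefficients satisfy the third-order nonlinear difference equation 16k⁴(α+β+n+1/2)²·(β_{n+1}−β_n)²·G_n = [G_{n+1} − G_n − 4k⁴(α+β+n+1/2)²·(β_{n+1}−β_n)²]², an equation relating β_{n−1}, β_n, β_{n+1}, β_{n+2}. -/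

import Mathlib

open MeasureTheory

/-- The auxiliary quantity `G_m` appearing in the third-order difference equation. -/
noncomputable def Gaux (α β k2 : ℝ) (b : ℕ → ℝ) (m : ℕ) : ℝ :=
  4 * k2 ^ 2 * (α + β + (m:ℝ) + 1/2) * (α + β + (m:ℝ) - 3/2) * b m * b (m - 1)
  + 4 * k2 ^ 2 * (α + β + (m:ℝ) + 3/2) * (α + β + (m:ℝ) - 1/2) * b (m + 1) * b m
  + 8 * k2 ^ 2 * (α + β + (m:ℝ) + 1/2) * (α + β + (m:ℝ) - 1/2) * b m ^ 2
  - 4 * k2 * (k2 + 1) * (α + β + (m:ℝ) + 1/2) * (α + β + (m:ℝ) - 1/2) * b m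
  + (α * k2 + β) ^ 2 + k2 * (m:ℝ) * ((m:ℝ) + 2 * α + 2 * β)

/-!
Let `L p = ∫ p w` and `σ = (1 - x²)(1 - κx²)`, so that `(σw)' = τw` with `τ` an odd cubic.
Integrating `(σpw)'` gives `L (σp' + τp) = 0`, hence `L (σ(fg' - f'g)) = L (f(2σg' + τg))`.
Take `f = P n` and `g = X * P n = P (n + 1) + b n • P (n - 1)`, whose Wronskian is `(P n)²`: the
left side follows from the recurrence, and the right side also involves the two leading
coefficients of `P n` and `P (n - 1)`, because the Wronskian is alternating. Multiplied by
`2κ(α + β + n + 1/2)`, the resulting "string equation" for `b` says that `G n - (S n)²` does not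
depend on `n`, where `S n` is affine in `b n` and `∑ j < n, b j`; it vanishes at `n = 0`, so
`G n = (S n)²`. The difference equation is then `4 D² S² = ((S + D)² - S² - D²)²` with
`D = S (n + 1) - S n = 2κ(α + β + n + 1/2)(b (n + 1) - b n)`.
-/

open Polynomial

section Orthogonal

variable {R : Type*} [CommRing R]

/-- `P` are the monic orthogonal polynomials of the symmetric moment functional `L`, with
`h n = L (P n ^ 2)` and recurrence coefficients `b`. Since `b 0 = 0`, the value of `P (n - 1)` at
`n = 0` is irrelevant, and the recurrence forces `P 1 = X`. -/
structure IsSymmetricOrthogonal (L : R[X] →ₗ[R] R) (P : ℕ → R[X]) (h b : ℕ → R) : Prop where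
  monic : ∀ n, (P n).Monic
  natDegree : ∀ n, (P n).natDegree = n
  orth : ∀ m n, L (P m * P n) = if m = n then h n else 0
  b_zero : b 0 = 0
  recurrence : ∀ n, X * P n = P (n + 1) + b n • P (n - 1)

/-- The coefficient of `X ^ (n - 2)` in the `n`-th monic orthogonal polynomial of a symmetric
functional, in terms of the recurrence coefficients: the `p1(n)` of the paper. -/
def subleading (b : ℕ → R) (n : ℕ) : R := -∑ j ∈ Finset.range n, b j

theorem subleading_succ (b : ℕ → R) (n : ℕ) : subleading b (n + 1) = subleading b n - b n := by
  rw [subleading, subleading, Finset.sum_range_succ, neg_add, sub_eq_add_neg]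

/-- The distributional Pearson equation `(σL)' = τL` for a functional `L` on polynomials. -/
def IsPearson (L : R[X] →ₗ[R] R) (σ τ : R[X]) : Prop :=
  ∀ p, L (σ * derivative p + τ * p) = 0

/-- The matrix entry `L (P (n + 1) * (2σ(P n)' + τ P n)) / h (n + 1)` of the skew-adjoint operator
`2σ d/dx + τ`, for `σ = s₀ + s₂ x² + s₄ x⁴` and `τ = t₁ x + t₃ x³`. -/
def skewCoeff (s₂ s₄ t₁ t₃ : R) (b : ℕ → R) (n : ℕ) : R :=
  2 * s₂ * n + t₁ + (2 * s₄ * n + t₃) * (b n + b (n + 1) + b (n + 2)) - 4 * s₄ * subleading b n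

theorem IsPearson.apply_mul_wronskian {L : R[X] →ₗ[R] R} {σ τ : R[X]} (hL : IsPearson L σ τ)
    (f g : R[X]) : L (σ * wronskian f g) = L (f * (2 * σ * derivative g + τ * g)) := by
  have hsplit : f * (2 * σ * derivative g + τ * g)
      = σ * wronskian f g + (σ * derivative (f * g) + τ * (f * g)) := by
    rw [wronskian, derivative_mul]; ring
  rw [hsplit, map_add, hL, add_zero]

theorem wronskian_X_mul_self (p : R[X]) : wronskian p (X * p) = p * p := by
  rw [wronskian, derivative_mul, derivative_X]; ring

theorem coeff_X_mul_derivative (p : R[X]) (n : ℕ) :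
    (X * derivative p).coeff n = n * p.coeff n := by
  cases n with
  | zero => simp
  | succ n => rw [coeff_X_mul, coeff_derivative]; push_cast; ring

theorem coeff_X_sq_mul_X_mul_derivative_sub (p : R[X]) (n j : ℕ) :
    (X ^ 2 * (X * derivative p - n • p)).coeff j = ((j : R) - n - 2) * (X ^ 2 * p).coeff j := by
  have heuler : X ^ 2 * (X * derivative p - n • p)
      = X * derivative (X ^ 2 * p) - ((n : R) + 2) • (X ^ 2 * p) := by
    rw [derivative_mul, derivative_X_pow, smul_eq_C_mul, nsmul_eq_mul, C_add]
    simp only [Nat.cast_ofNat, Nat.add_one_sub_one, pow_one, map_natCast, C_ofNat]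
    ring
  rw [heuler, coeff_sub, coeff_X_mul_derivative, coeff_smul, smul_eq_mul]
  ring

namespace IsSymmetricOrthogonal

variable {L : R[X] →ₗ[R] R} {P : ℕ → R[X]} {h b : ℕ → R}

theorem of_apply_X_eq_zero [NoZeroDivisors R] (hLX : L X = 0) (hmonic : ∀ n, (P n).Monic)
    (hdeg : ∀ n, (P n).natDegree = n) (horth : ∀ m n, L (P m * P n) = if m = n then h n else 0)
    (hh : h 0 ≠ 0) (hb : b 0 = 0)
    (hrec : ∀ n, 1 ≤ n → X * P n = P (n + 1) + b n • P (n - 1)) :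
    IsSymmetricOrthogonal L P h b where
  monic := hmonic
  natDegree := hdeg
  orth := horth
  b_zero := hb
  recurrence n := by
    rcases n.eq_zero_or_pos with rfl | hn
    · have hP0 : P 0 = 1 := (hmonic 0).natDegree_eq_zero.mp (hdeg 0)
      have hP1 : P 1 = X + (P 1).coeff 0 • 1 := by
        rw [smul_eq_C_mul, mul_one]; exact (hmonic 1).eq_X_add_C (hdeg 1)
      have hL1 : L 1 = h 0 := by simpa [hP0] using horth 0 0
      have hc : (P 1).coeff 0 * h 0 = 0 := by
        have hL10 := horth 1 0
        rwa [hP0, mul_one, hP1, map_add, hLX, map_smul, hL1, zero_add, smul_eq_mul,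
          if_neg one_ne_zero] at hL10
      rw [(mul_eq_zero.mp hc).resolve_right hh, zero_smul, add_zero] at hP1
      simp [hP0, hP1, hb]
    · exact hrec n hn

theorem zero_eq_one (H : IsSymmetricOrthogonal L P h b) : P 0 = 1 :=
  (H.monic 0).natDegree_eq_zero.mp (H.natDegree 0)

theorem coeff_self (H : IsSymmetricOrthogonal L P h b) (n : ℕ) : (P n).coeff n = 1 := by
  simpa only [H.natDegree] using (H.monic n).coeff_natDegree

theorem coeff_of_lt (H : IsSymmetricOrthogonal L P h b) {n m : ℕ} (hnm : n < m) :
    (P n).coeff m = 0 :=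
  coeff_eq_zero_of_natDegree_lt (by rwa [H.natDegree])

theorem coeff_X_mul_self (H : IsSymmetricOrthogonal L P h b) (n : ℕ) :
    (X * P n).coeff n = 0 := by
  induction n with
  | zero => simp
  | succ n ih =>
    have hcoeff := congrArg (coeff · n) (H.recurrence n)
    rcases n.eq_zero_or_pos with rfl | hn
    · simpa [H.b_zero] using hcoeff.symm
    · simpa [ih, H.coeff_of_lt (Nat.sub_lt hn one_pos)] using hcoeff.symm

theorem coeff_X_sq_mul_self (H : IsSymmetricOrthogonal L P h b) (n : ℕ) :
    (X ^ 2 * P n).coeff n = subleading b n := by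
  induction n with
  | zero => simp [subleading]
  | succ n ih =>
    have hcoeff : (X ^ 2 * P n).coeff n
        = (X * P (n + 1)).coeff n + b n * (X * P (n - 1)).coeff n := by
      rw [pow_two, mul_assoc, H.recurrence, mul_add, coeff_add, mul_smul_comm, coeff_smul,
        smul_eq_mul]
    have hlead : b n * (X * P (n - 1)).coeff n = b n := by
      cases n with
      | zero => rw [H.b_zero, zero_mul]
      | succ n => rw [Nat.add_sub_cancel, coeff_X_mul, H.coeff_self, mul_one]
    rw [pow_two, mul_assoc, coeff_X_mul, subleading_succ, ← ih, hcoeff, hlead, add_sub_cancel_right]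

theorem apply_succ_mul_X_mul (H : IsSymmetricOrthogonal L P h b) (n : ℕ) :
    L (P (n + 1) * (X * P n)) = h (n + 1) := by
  simp [H.recurrence n, mul_add, H.orth, show n + 1 ≠ n - 1 by omega]

theorem norm_succ (H : IsSymmetricOrthogonal L P h b) (n : ℕ) : h (n + 1) = b (n + 1) * h n := by
  calc h (n + 1) = L (P (n + 1) * (X * P n)) := (H.apply_succ_mul_X_mul n).symm
    _ = L (P n * (X * P (n + 1))) := by congr 1; ring
    _ = b (n + 1) * h n := by
        simp [H.recurrence (n + 1), mul_add, H.orth, show n ≠ n + 1 + 1 by omega]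

theorem mul_norm_pred (H : IsSymmetricOrthogonal L P h b) (n : ℕ) :
    b n * (b n * h (n - 1)) = b n * h n := by
  cases n with
  | zero => simp [H.b_zero]
  | succ n => rw [Nat.add_sub_cancel, ← H.norm_succ]

theorem apply_mul_X_pow_eq_zero (H : IsSymmetricOrthogonal L P h b) {k n : ℕ} (hk : k < n) :
    L (P n * X ^ k) = 0 := by
  induction k generalizing n with
  | zero => simpa [H.zero_eq_one, hk.ne'] using H.orth n 0
  | succ k ih =>
    have hshift : P n * X ^ (k + 1) = P (n + 1) * X ^ k + b n • (P (n - 1) * X ^ k) := by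
      rw [← smul_mul_assoc, ← add_mul, ← H.recurrence]; ring
    rw [hshift, map_add, map_smul, ih (by omega), ih (by omega), smul_zero, add_zero]

theorem apply_mul_X_pow_self (H : IsSymmetricOrthogonal L P h b) (n : ℕ) :
    L (P n * X ^ n) = h n := by
  induction n with
  | zero => simpa [H.zero_eq_one] using H.orth 0 0
  | succ n ih =>
    have hshift : P (n + 1) * X ^ (n + 1) = P (n + 2) * X ^ n + b (n + 1) • (P n * X ^ n) := by
      have hrec := H.recurrence (n + 1)
      rw [Nat.add_sub_cancel] at hrec
      rw [← smul_mul_assoc, ← add_mul, ← hrec]; ring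
    rw [hshift, map_add, map_smul, H.apply_mul_X_pow_eq_zero (by omega), ih, zero_add,
      smul_eq_mul, H.norm_succ]

theorem apply_mul_of_natDegree_le (H : IsSymmetricOrthogonal L P h b) {q : R[X]} {n : ℕ}
    (hq : q.natDegree ≤ n) : L (P n * q) = h n * q.coeff n := by
  have hsmul (k : ℕ) : L (P n * (C (q.coeff k) * X ^ k)) = q.coeff k * L (P n * X ^ k) := by
    rw [← smul_eq_C_mul, mul_smul_comm, map_smul, smul_eq_mul]
  conv_lhs => rw [q.as_sum_range_C_mul_X_pow' (Nat.lt_succ_of_le hq)]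
  rw [Finset.mul_sum, map_sum, Finset.sum_range_succ, Finset.sum_eq_zero, zero_add, hsmul,
    H.apply_mul_X_pow_self, mul_comm]
  intro k hk
  rw [hsmul, H.apply_mul_X_pow_eq_zero (Finset.mem_range.mp hk), mul_zero]

theorem X_sq_mul (H : IsSymmetricOrthogonal L P h b) (n : ℕ) :
    X ^ 2 * P n = P (n + 2) + (b n + b (n + 1)) • P n + (b n * b (n - 1)) • P (n - 2) := by
  have hpred : b n • (X * P (n - 1)) = b n • P n + (b n * b (n - 1)) • P (n - 2) := by
    cases n with
    | zero => simp [H.b_zero]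
    | succ n => simp [H.recurrence n, mul_smul]
  have hsucc := H.recurrence (n + 1)
  rw [Nat.add_sub_cancel] at hsucc
  rw [pow_two, mul_assoc, H.recurrence, mul_add, mul_smul_comm, hpred, hsucc, add_smul]
  abel

theorem apply_succ_mul_X_cube_mul (H : IsSymmetricOrthogonal L P h b) (n : ℕ) :
    L (P (n + 1) * (X ^ 3 * P n)) = h (n + 1) * (b n + b (n + 1) + b (n + 2)) := by
  have hsplit : P (n + 1) * (X ^ 3 * P n) = (X ^ 2 * P (n + 1)) * (X * P n) := by ring
  rw [hsplit, H.X_sq_mul, H.recurrence, show n + 1 - 2 = n - 1 by omega, Nat.add_sub_cancel]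
  simp only [add_mul, mul_add, smul_mul_assoc, mul_smul_comm, map_add, map_smul, H.orth,
    smul_eq_mul, if_true, show n + 1 + 2 ≠ n + 1 by omega, show n + 1 + 2 ≠ n - 1 by omega,
    show n + 1 ≠ n - 1 by omega, show n - 1 ≠ n + 1 by omega, if_false, H.norm_succ n]
  linear_combination b (n + 1) * H.mul_norm_pred n

theorem apply_mul_X_sq_mul (H : IsSymmetricOrthogonal L P h b) (n : ℕ) :
    L (P n * (X ^ 2 * P n)) = h n * (b n + b (n + 1)) := by
  rw [H.X_sq_mul]
  simp only [mul_add, mul_smul_comm, map_add, map_smul, H.orth, smul_eq_mul, if_true,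
    show n ≠ n + 2 by omega, if_false]
  cases n with
  | zero => simp [H.b_zero, mul_comm]
  | succ n => rw [if_neg (by omega)]; ring

theorem apply_mul_X_pow_four_mul (H : IsSymmetricOrthogonal L P h b) (n : ℕ) :
    L (P n * (X ^ 4 * P n))
      = h n * (b (n + 1) * b (n + 2) + (b n + b (n + 1)) ^ 2 + b n * b (n - 1)) := by
  have hsplit : P n * (X ^ 4 * P n) = (X ^ 2 * P n) * (X ^ 2 * P n) := by ring
  have hnorm : b n * b (n - 1) * (b n * b (n - 1) * h (n - 2)) = b n * b (n - 1) * h n := by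
    linear_combination b n ^ 2 * H.mul_norm_pred (n - 1) + b (n - 1) * H.mul_norm_pred n
  have hcross : b n * b (n - 1) * (if n = n - 2 then h (n - 2) else 0) = 0 := by
    cases n with
    | zero => simp [H.b_zero]
    | succ n => rw [if_neg (by omega), mul_zero]
  rw [hsplit, H.X_sq_mul]
  simp only [add_mul, mul_add, smul_mul_assoc, mul_smul_comm, map_add, map_smul, smul_eq_mul,
    mul_comm (P (n - 2)) (P n), H.orth, if_true, if_false, show n + 2 ≠ n by omega,
    show n ≠ n + 2 by omega, show n + 2 ≠ n - 2 by omega, show n - 2 ≠ n + 2 by omega,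
    H.norm_succ]
  linear_combination hnorm + 2 * (b n + b (n + 1)) * hcross

theorem apply_succ_mul_derivative (H : IsSymmetricOrthogonal L P h b) (n : ℕ) :
    L (P (n + 1) * derivative (P n)) = 0 := by
  rw [H.apply_mul_of_natDegree_le, coeff_derivative, H.coeff_of_lt (by omega), zero_mul, mul_zero]
  have hdeg := natDegree_derivative_le (P n)
  rw [H.natDegree] at hdeg
  omega

theorem natDegree_X_mul_derivative_le (H : IsSymmetricOrthogonal L P h b) (n : ℕ) :
    (X * derivative (P n)).natDegree ≤ n :=
  natDegree_le_iff_coeff_eq_zero.mpr fun j hj => by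
    rw [coeff_X_mul_derivative, H.coeff_of_lt hj, mul_zero]

theorem apply_succ_mul_X_sq_mul_derivative (H : IsSymmetricOrthogonal L P h b) (n : ℕ) :
    L (P (n + 1) * (X ^ 2 * derivative (P n))) = h (n + 1) * n := by
  have hdeg : (X * (X * derivative (P n))).natDegree ≤ n + 1 := by
    rw [add_comm]
    exact natDegree_mul_le_of_le natDegree_X_le (H.natDegree_X_mul_derivative_le n)
  rw [pow_two, mul_assoc, H.apply_mul_of_natDegree_le hdeg, coeff_X_mul, coeff_X_mul_derivative,
    H.coeff_self, mul_one]

theorem apply_succ_mul_X_pow_four_mul_derivative (H : IsSymmetricOrthogonal L P h b) (n : ℕ) :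
    L (P (n + 1) * (X ^ 4 * derivative (P n)))
      = h (n + 1) * (n * (b n + b (n + 1) + b (n + 2)) - 2 * subleading b n) := by
  set r := X ^ 2 * (X * derivative (P n) - n • P n) with hr
  have hsplit : P (n + 1) * (X ^ 4 * derivative (P n))
      = P (n + 1) * (X * r) + n • (P (n + 1) * (X ^ 3 * P n)) := by
    simp only [hr, nsmul_eq_mul]; ring
  have hdeg : r.natDegree ≤ n := natDegree_le_iff_coeff_eq_zero.mpr fun j hj => by
    rw [hr, coeff_X_sq_mul_X_mul_derivative_sub]
    obtain rfl | rfl | hj : j = n + 1 ∨ j = n + 2 ∨ n + 2 < j := by omega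
    · rw [pow_two, mul_assoc, coeff_X_mul, H.coeff_X_mul_self, mul_zero]
    · push_cast; ring
    · obtain ⟨j, rfl⟩ := Nat.exists_eq_add_of_le' (show 2 ≤ j by omega)
      rw [coeff_X_pow_mul, H.coeff_of_lt (by omega), mul_zero]
  have hdeg' : (X * r).natDegree ≤ n + 1 := by
    rw [add_comm]; exact natDegree_mul_le_of_le natDegree_X_le hdeg
  rw [hsplit, map_add, map_nsmul, H.apply_succ_mul_X_cube_mul, H.apply_mul_of_natDegree_le hdeg',
    coeff_X_mul, hr, coeff_X_sq_mul_X_mul_derivative_sub, H.coeff_X_sq_mul_self, nsmul_eq_mul]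
  ring

theorem apply_mul_wronskian_succ (H : IsSymmetricOrthogonal L P h b) {s₀ s₂ s₄ t₁ t₃ : R}
    (hL : IsPearson L (C s₀ + C s₂ * X ^ 2 + C s₄ * X ^ 4) (C t₁ * X + C t₃ * X ^ 3)) (n : ℕ) :
    L ((C s₀ + C s₂ * X ^ 2 + C s₄ * X ^ 4) * wronskian (P (n + 1)) (P n))
      = h (n + 1) * skewCoeff s₂ s₄ t₁ t₃ b n := by
  have hexpand : P (n + 1) * (2 * (C s₀ + C s₂ * X ^ 2 + C s₄ * X ^ 4) * derivative (P n)
        + (C t₁ * X + C t₃ * X ^ 3) * P n)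
      = (2 * s₀) • (P (n + 1) * derivative (P n))
        + (2 * s₂) • (P (n + 1) * (X ^ 2 * derivative (P n)))
        + (2 * s₄) • (P (n + 1) * (X ^ 4 * derivative (P n)))
        + t₁ • (P (n + 1) * (X * P n)) + t₃ • (P (n + 1) * (X ^ 3 * P n)) := by
    simp only [smul_eq_C_mul, C_mul, C_ofNat]; ring
  rw [hL.apply_mul_wronskian, hexpand]
  simp only [map_add, map_smul, smul_eq_mul, H.apply_succ_mul_derivative,
    H.apply_succ_mul_X_sq_mul_derivative, H.apply_succ_mul_X_pow_four_mul_derivative,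
    H.apply_succ_mul_X_mul, H.apply_succ_mul_X_cube_mul, skewCoeff]
  ring

theorem apply_even_quartic_mul_sq (H : IsSymmetricOrthogonal L P h b) (s₀ s₂ s₄ : R) (n : ℕ) :
    L ((C s₀ + C s₂ * X ^ 2 + C s₄ * X ^ 4) * (P n * P n))
      = h n * (s₀ + s₂ * (b n + b (n + 1))
        + s₄ * (b (n + 1) * b (n + 2) + (b n + b (n + 1)) ^ 2 + b n * b (n - 1))) := by
  have hexpand : (C s₀ + C s₂ * X ^ 2 + C s₄ * X ^ 4) * (P n * P n)
      = s₀ • (P n * P n) + s₂ • (P n * (X ^ 2 * P n)) + s₄ • (P n * (X ^ 4 * P n)) := by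
    simp only [smul_eq_C_mul]; ring
  rw [hexpand]
  simp only [map_add, map_smul, smul_eq_mul, H.orth, if_true, H.apply_mul_X_sq_mul,
    H.apply_mul_X_pow_four_mul]
  ring

theorem string_equation [NoZeroDivisors R] (H : IsSymmetricOrthogonal L P h b)
    {s₀ s₂ s₄ t₁ t₃ : R}
    (hL : IsPearson L (C s₀ + C s₂ * X ^ 2 + C s₄ * X ^ 4) (C t₁ * X + C t₃ * X ^ 3))
    {n : ℕ} (hn : h n ≠ 0) :
    s₀ + s₂ * (b n + b (n + 1))
        + s₄ * (b (n + 1) * b (n + 2) + (b n + b (n + 1)) ^ 2 + b n * b (n - 1))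
      = b n * skewCoeff s₂ s₄ t₁ t₃ b (n - 1) - b (n + 1) * skewCoeff s₂ s₄ t₁ t₃ b n := by
  set σ : R[X] := C s₀ + C s₂ * X ^ 2 + C s₄ * X ^ 4 with hσ
  have hsucc := H.apply_mul_wronskian_succ hL n
  have hpred : b n * L (σ * wronskian (P n) (P (n - 1)))
      = b n * (h n * skewCoeff s₂ s₄ t₁ t₃ b (n - 1)) := by
    cases n with
    | zero => simp [H.b_zero]
    | succ n => rw [Nat.add_sub_cancel, H.apply_mul_wronskian_succ hL]
  have hwronskian : P n * P n
      = -wronskian (P (n + 1)) (P n) + b n • wronskian (P n) (P (n - 1)) := by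
    rw [← wronskian_X_mul_self, H.recurrence, wronskian_add_right, wronskian_neg_eq,
      ← wronskianBilin_apply (P n) (b n • _), map_smul, wronskianBilin_apply]
  have hsq := H.apply_even_quartic_mul_sq s₀ s₂ s₄ n
  rw [← hσ, hwronskian, mul_add, mul_neg, mul_smul_comm, map_add, map_neg, map_smul, smul_eq_mul,
    hsucc, hpred, H.norm_succ] at hsq
  apply mul_left_cancel₀ hn
  linear_combination -hsq

end IsSymmetricOrthogonal

end Orthogonal

/-- `σ = (1 - x²)(1 - κx²)`, one half of the Pearson pair of the weight `(1 - x²)^α (1 - κx²)^β`. -/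
noncomputable def pearsonSigma (κ : ℝ) : ℝ[X] := C 1 + C (-(1 + κ)) * X ^ 2 + C κ * X ^ 4

/-- `τ = (σw)' / w` for the weight `w = (1 - x²)^α (1 - κx²)^β` and `σ = pearsonSigma κ`. -/
noncomputable def pearsonTau (α β κ : ℝ) : ℝ[X] :=
  C (-(2 * (α + 1 + κ * (β + 1)))) * X + C (2 * κ * (α + β + 2)) * X ^ 3

theorem eval_pearsonSigma (κ x : ℝ) :
    (pearsonSigma κ).eval x = (1 - x ^ 2) * (1 - κ * x ^ 2) := by
  simp only [pearsonSigma, eval_add, eval_mul, eval_C, eval_pow, eval_X]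
  ring

theorem eval_pearsonTau (α β κ x : ℝ) : (pearsonTau α β κ).eval x
    = -(2 * x) * (α + 1) * (1 - κ * x ^ 2) + (1 - x ^ 2) * (-(κ * (2 * x)) * (β + 1)) := by
  simp only [pearsonTau, eval_add, eval_mul, eval_C, eval_pow, eval_X]
  ring

/-- The square root of `Gaux α β κ b n` that is affine in `b n` and in the partial sum of `b`. -/
noncomputable def gauxRoot (α β κ : ℝ) (b : ℕ → ℝ) (n : ℕ) : ℝ :=
  2 * κ * ((α + β + n - 1/2) * b n + subleading b n) - (α * κ + β)

theorem gauxRoot_succ (α β κ : ℝ) (b : ℕ → ℝ) (n : ℕ) :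
    gauxRoot α β κ b (n + 1)
      = gauxRoot α β κ b n + 2 * κ * (α + β + n + 1/2) * (b (n + 1) - b n) := by
  rw [gauxRoot, gauxRoot, subleading_succ]
  push_cast
  ring

theorem IsSymmetricOrthogonal.gaux_eq_gauxRoot_sq {L : ℝ[X] →ₗ[ℝ] ℝ} {P : ℕ → ℝ[X]}
    {h b : ℕ → ℝ} {α β κ : ℝ} (H : IsSymmetricOrthogonal L P h b) (hh : ∀ n, h n ≠ 0)
    (hL : IsPearson L (pearsonSigma κ) (pearsonTau α β κ)) (n : ℕ) :
    Gaux α β κ b n = gauxRoot α β κ b n ^ 2 := by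
  induction n with
  | zero => simp [Gaux, gauxRoot, H.b_zero, subleading]; ring
  | succ n ih =>
    have hstring := H.string_equation hL (hh n)
    have hb := H.b_zero
    rw [gauxRoot_succ]
    cases n with
    | zero =>
      simp only [Gaux, gauxRoot, skewCoeff, hb] at ih hstring ⊢
      push_cast at ih hstring ⊢
      linear_combination ih + 2 * κ * (α + β + 1/2) * hstring
    | succ n =>
      simp only [Gaux, gauxRoot, skewCoeff, Nat.add_sub_cancel, subleading_succ] at ih hstring ⊢
      push_cast at ih hstring ⊢
      linear_combination ih + 2 * κ * (α + β + n + 1 + 1/2) * hstring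

section Weight

/-- Integration against an integrable weight, as a linear functional on polynomials. -/
noncomputable def weightFunctional {a b : ℝ} {w : ℝ → ℝ} (hw : IntervalIntegrable w volume a b) :
    ℝ[X] →ₗ[ℝ] ℝ where
  toFun p := ∫ x in a..b, p.eval x * w x
  map_add' p q := by
    simp only [eval_add, add_mul]
    exact intervalIntegral.integral_add (hw.continuousOn_mul p.continuousOn)
      (hw.continuousOn_mul q.continuousOn)
  map_smul' c p := by
    simp only [eval_smul, smul_eq_mul, mul_assoc, RingHom.id_apply,
      intervalIntegral.integral_const_mul]

theorem weightFunctional_apply {a b : ℝ} {w : ℝ → ℝ} (hw : IntervalIntegrable w volume a b)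
    (p : ℝ[X]) : weightFunctional hw p = ∫ x in a..b, p.eval x * w x := rfl

theorem weightFunctional_X_of_even {a : ℝ} {w : ℝ → ℝ} (hw : IntervalIntegrable w volume (-a) a)
    (heven : w.Even) : weightFunctional hw X = 0 := by
  have hneg := intervalIntegral.integral_comp_neg (a := -a) (b := a) (fun x => x * w x)
  simp only [heven _, neg_mul, intervalIntegral.integral_neg, neg_neg] at hneg
  simp only [weightFunctional_apply, eval_X]
  linarith

theorem isPearson_weightFunctional {a b : ℝ} {w : ℝ → ℝ} {σ τ : ℝ[X]} (hab : a ≤ b)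
    (hw : IntervalIntegrable w volume a b)
    (hcont : ContinuousOn (fun x => σ.eval x * w x) (Set.Icc a b))
    (hderiv : ∀ x ∈ Set.Ioo a b, HasDerivAt (fun x => σ.eval x * w x) (τ.eval x * w x) x)
    (ha : σ.eval a * w a = 0) (hb : σ.eval b * w b = 0) :
    IsPearson (weightFunctional hw) σ τ := by
  intro p
  rw [weightFunctional_apply, intervalIntegral.integral_eq_sub_of_hasDerivAt_of_le hab
    (hcont.mul p.continuousOn) _ (hw.continuousOn_mul (Polynomial.continuousOn _))]
  · simp only [Pi.mul_apply, ha, hb, zero_mul, sub_zero]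
  · intro x hx
    refine ((hderiv x hx).mul (p.hasDerivAt x)).congr_deriv ?_
    simp only [eval_add, eval_mul]
    ring

variable {α β κ : ℝ}

theorem one_sub_mul_sq_pos (hκ : κ < 1) {x : ℝ} (hx : x ∈ Set.Icc (-1 : ℝ) 1) :
    0 < 1 - κ * x ^ 2 := by
  have hx2 : x ^ 2 ≤ 1 := (sq_le_one_iff_abs_le_one x).mpr (abs_le.mpr hx)
  rcases le_total κ 0 with hκ0 | hκ0
  · linarith [mul_nonpos_of_nonpos_of_nonneg hκ0 (sq_nonneg x)]
  · linarith [mul_le_of_le_one_right hκ0 hx2]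

theorem eval_pearsonSigma_mul_rpow (hα : -1 < α) (hκ : κ < 1) {x : ℝ}
    (hx : x ∈ Set.Icc (-1 : ℝ) 1) :
    (pearsonSigma κ).eval x * ((1 - x ^ 2) ^ α * (1 - κ * x ^ 2) ^ β)
      = (1 - x ^ 2) ^ (α + 1) * (1 - κ * x ^ 2) ^ (β + 1) := by
  have hx2 : 0 ≤ 1 - x ^ 2 := sub_nonneg.mpr ((sq_le_one_iff_abs_le_one x).mpr (abs_le.mpr hx))
  rw [eval_pearsonSigma, Real.rpow_add_one' hx2 (by linarith),
    Real.rpow_add_one (one_sub_mul_sq_pos hκ hx).ne']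
  ring

theorem continuousOn_rpow_mul_rpow (hα : 0 ≤ α) (hκ : κ < 1) :
    ContinuousOn (fun x : ℝ => (1 - x ^ 2) ^ α * (1 - κ * x ^ 2) ^ β) (Set.Icc (-1) 1) :=
  .mul (.rpow_const (by fun_prop) fun _ _ => .inr hα)
    (.rpow_const (by fun_prop) fun _ hx => .inl (one_sub_mul_sq_pos hκ hx).ne')

theorem hasDerivAt_rpow_mul_rpow (hκ : κ < 1) {x : ℝ} (hx : x ∈ Set.Ioo (-1 : ℝ) 1) :
    HasDerivAt (fun x : ℝ => (1 - x ^ 2) ^ (α + 1) * (1 - κ * x ^ 2) ^ (β + 1))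
      ((pearsonTau α β κ).eval x * ((1 - x ^ 2) ^ α * (1 - κ * x ^ 2) ^ β)) x := by
  have hx2 : 0 < 1 - x ^ 2 := sub_pos.mpr ((sq_lt_one_iff_abs_lt_one x).mpr (abs_lt.mpr hx))
  have hκx2 := one_sub_mul_sq_pos hκ (Set.Ioo_subset_Icc_self hx)
  have hderiv₁ : HasDerivAt (fun x : ℝ => 1 - x ^ 2) (-(2 * x)) x := by
    simpa using (hasDerivAt_pow 2 x).const_sub 1
  have hderiv₂ : HasDerivAt (fun x : ℝ => 1 - κ * x ^ 2) (-(κ * (2 * x))) x := by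
    simpa using ((hasDerivAt_pow 2 x).const_mul κ).const_sub 1
  refine ((hderiv₁.rpow_const (p := α + 1) (.inl hx2.ne')).mul
    (hderiv₂.rpow_const (p := β + 1) (.inl hκx2.ne'))).congr_deriv ?_
  rw [eval_pearsonTau, add_sub_cancel_right, add_sub_cancel_right, Real.rpow_add_one hx2.ne',
    Real.rpow_add_one hκx2.ne']
  ring

theorem isPearson_rpow_mul_rpow (hα : -1 < α) (hκ : κ < 1) {w : ℝ → ℝ}
    (hw : ∀ x, w x = (1 - x ^ 2) ^ α * (1 - κ * x ^ 2) ^ β)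
    (hint : IntervalIntegrable w volume (-1) 1) :
    IsPearson (weightFunctional hint) (pearsonSigma κ) (pearsonTau α β κ) := by
  have hσw : ∀ x ∈ Set.Icc (-1 : ℝ) 1, (pearsonSigma κ).eval x * w x
      = (1 - x ^ 2) ^ (α + 1) * (1 - κ * x ^ 2) ^ (β + 1) := fun x hx => by
    rw [hw, eval_pearsonSigma_mul_rpow hα hκ hx]
  refine isPearson_weightFunctional (by norm_num) hint
    ((continuousOn_rpow_mul_rpow (by linarith) hκ).congr hσw) (fun x hx => ?_)
    (by simp [eval_pearsonSigma]) (by simp [eval_pearsonSigma])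
  rw [hw]
  refine (hasDerivAt_rpow_mul_rpow hκ hx).congr_of_eventuallyEq ?_
  filter_upwards [Icc_mem_nhds hx.1 hx.2] using hσw

end Weight

theorem stmt_1_general {α β κ : ℝ} (hα : -1 < α) (hκ : κ < 1) {w : ℝ → ℝ}
    (hw : ∀ x, w x = (1 - x ^ 2) ^ α * (1 - κ * x ^ 2) ^ β)
    {P : ℕ → ℝ[X]} (hPmonic : ∀ n, (P n).Monic) (hPdeg : ∀ n, (P n).natDegree = n)
    {h : ℕ → ℝ} (hh : ∀ n, h n ≠ 0)
    (horth : ∀ m n,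
      (∫ x in (-1 : ℝ)..1, (P m).eval x * (P n).eval x * w x) = if m = n then h n else 0)
    {b : ℕ → ℝ} (hb0 : b 0 = 0)
    (hrec : ∀ n, 1 ≤ n → X * P n = P (n + 1) + C (b n) * P (n - 1)) (n : ℕ) :
    16 * κ ^ 2 * (α + β + n + 1/2) ^ 2 * (b (n + 1) - b n) ^ 2 * Gaux α β κ b n
      = (Gaux α β κ b (n + 1) - Gaux α β κ b n
          - 4 * κ ^ 2 * (α + β + n + 1/2) ^ 2 * (b (n + 1) - b n) ^ 2) ^ 2 := by
  have hP0 : P 0 = 1 := (hPmonic 0).natDegree_eq_zero.mp (hPdeg 0)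
  have hint : IntervalIntegrable w volume (-1) 1 := by
    refine intervalIntegral.intervalIntegrable_of_integral_ne_zero ?_
    simpa [hP0] using (horth 0 0).trans_ne (hh 0)
  have heven : w.Even := fun x => by simp only [hw, neg_sq]
  have H : IsSymmetricOrthogonal (weightFunctional hint) P h b :=
    .of_apply_X_eq_zero (weightFunctional_X_of_even hint heven) hPmonic hPdeg
      (fun m n => by simp only [weightFunctional_apply, eval_mul, horth]) (hh 0) hb0
      (fun n hn => by rw [hrec n hn, smul_eq_C_mul])
  have hG := H.gaux_eq_gauxRoot_sq hh (isPearson_rpow_mul_rpow hα hκ hw hint)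
  rw [hG, hG, gauxRoot_succ]
  ring

/-- The recurrence coefficients `β_n` satisfy the third-order
nonlinear difference equation
`16k⁴(α+β+n+1/2)²(β_{n+1}−β_n)²·G_n = (G_{n+1} − G_n − 4k⁴(α+β+n+1/2)²(β_{n+1}−β_n)²)²`. -/
theorem stmt_1
    (α β k2 : ℝ) (hα : -1 < α) (hk2 : k2 ∈ Set.Ioo (0:ℝ) 1)
    (w : ℝ → ℝ)
    (hw : ∀ x : ℝ, w x = (1 - x ^ 2) ^ α * (1 - k2 * x ^ 2) ^ β)
    (P : ℕ → Polynomial ℝ)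
    (hPmonic : ∀ n, (P n).Monic)
    (hPdeg : ∀ n, (P n).natDegree = n)
    (h : ℕ → ℝ) (hpos : ∀ n, 0 < h n)
    (horth : ∀ m n : ℕ,
      (∫ x in (-1:ℝ)..1, (P m).eval x * (P n).eval x * w x)
        = if m = n then h n else 0)
    (b : ℕ → ℝ) (hb0 : b 0 = 0)
    (hrec : ∀ n : ℕ, 1 ≤ n →
      Polynomial.X * P n = P (n + 1) + Polynomial.C (b n) * P (n - 1)) :
    ∀ n : ℕ, 1 ≤ n →
      16 * k2 ^ 2 * (α + β + (n:ℝ) + 1/2) ^ 2 * (b (n + 1) - b n) ^ 2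
          * Gaux α β k2 b n
        = (Gaux α β k2 b (n + 1) - Gaux α β k2 b n
            - 4 * k2 ^ 2 * (α + β + (n:ℝ) + 1/2) ^ 2 * (b (n + 1) - b n) ^ 2) ^ 2 := by
  exact fun n _ => stmt_1_general hα hk2.2 hw hPmonic hPdeg (fun n => (hpos n).ne') horth hb0 hrec n
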